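/- Let (A,Λ) be an associative form ring with 1, n ≥ 3, and let (I,Γ), (J,Δ) be form ideals of (A,Λ). For any index i ∈ Ω, any a ∈ λ^{−(ε(i)+1)/2}Γ, b ∈ λ^{(ε(i)−1)/2}Δ, and any x ∈ EU(2n,A,Λ), one has x·Y_{i,−i}(a,b)·x⁻¹ ≡ Y_{i,−i}(a,b) modulo EU(2n,(I,Γ)∘(J,Δ)), i.e. x·Y_{i,−i}(a,b)·x⁻¹·Y_{i,−i}(a,b)⁻¹ ∈ EU(2n,(I,Γ)∘(J,Δ)), where Y_{i,−i}(a,b) = [T_{i,−i}(a), T_{−i,i}(b)]. -/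

import Mathlib

open Matrix
open scoped commutatorElement

/-- Bak's form ring data on a ring `A`: an involution `bar`, a central symmetry
`λ` with `λ λ̄ = 1`, and a form parameter `Λ`. -/
structure FormRingData (A : Type*) [Ring A] where
  bar : A →+ A
  bar_mul : ∀ a b : A, bar (a * b) = bar b * bar a
  bar_bar : ∀ a : A, bar (bar a) = a
  lam : A
  lam_comm : ∀ a : A, lam * a = a * lam
  lam_bar : lam * bar lam = 1
  Lambda : AddSubgroup A
  lambdaMin_mem : ∀ c : A, c - lam * bar c ∈ Lambda
  lambdaMax_mem : ∀ x ∈ Lambda, x = -(lam * bar x)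
  lambda_conj : ∀ (c : A), ∀ x ∈ Lambda, c * x * bar c ∈ Lambda

namespace FormRingData

variable {A : Type*} [Ring A]

/-- Integral powers of the symmetry `λ`; negative powers use `λ̄ = λ⁻¹`. -/
def lpow (D : FormRingData A) (k : ℤ) : A :=
  if 0 ≤ k then D.lam ^ k.toNat else (D.bar D.lam) ^ (-k).toNat

end FormRingData

/-- The index set `Ω = {1,…,n,−n,…,−1}`, coded as `Fin n × Bool`
(second component `true` = positive index). -/
abbrev Idx (n : ℕ) := Fin n × Bool

namespace Idx

/-- The involution `i ↦ −i` on indices. -/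
def neg {n : ℕ} (i : Idx n) : Idx n := (i.1, !i.2)

/-- The sign `ε(i) ∈ {±1}`. -/
def eps {n : ℕ} (i : Idx n) : ℤ := if i.2 then 1 else -1

theorem neg_ne {n : ℕ} (i : Idx n) : neg i ≠ i := by
  simp [neg, Prod.ext_iff]

theorem neg_injective {n : ℕ} : Function.Injective (neg (n := n)) := by
  intro i j h
  simp only [neg, Prod.mk.injEq] at h
  refine Prod.ext h.1 ?_
  have h2 := h.2
  cases hi : i.2 <;> cases hj : j.2 <;> simp_all

theorem neg_neg {n : ℕ} (i : Idx n) : neg (neg i) = i := by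
  simp [neg]

end Idx

/-- `GL(2n, A)`, realised as the units of the `Ω × Ω` matrix ring over `A`. -/
abbrev GLn (A : Type*) [Ring A] (n : ℕ) := (Matrix (Idx n) (Idx n) A)ˣ

section aux

theorem one_add_mul_one_sub {R : Type*} [Ring R] {X : R} (h : X * X = 0) :
    (1 + X) * (1 - X) = 1 := by
  have hh : (1 + X) * (1 - X) = 1 - X * X := by noncomm_ring
  rw [hh, h, sub_zero]

theorem one_sub_mul_one_add {R : Type*} [Ring R] {X : R} (h : X * X = 0) :
    (1 - X) * (1 + X) = 1 := by
  have hh : (1 - X) * (1 + X) = 1 - X * X := by noncomm_ring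
  rw [hh, h, sub_zero]

theorem stdBasisMatrix_neg' {A : Type*} [Ring A] {n : ℕ} (i j : Idx n) (c : A) :
    single i j (-c) = -single i j c := by
  refine eq_neg_of_add_eq_zero_left ?_
  rw [← Matrix.single_add]
  simp

end aux

namespace FormRingData

variable {A : Type*} [Ring A] {n : ℕ}

/-- The off-diagonal part of a short root element. -/
def Xmat (D : FormRingData A) (i j : Idx n) (c : A) : Matrix (Idx n) (Idx n) A :=
  single i j c -
    single (Idx.neg j) (Idx.neg i) (D.lpow ((Idx.eps j - Idx.eps i) / 2) * D.bar c)

theorem Xmat_mul (D : FormRingData A) {i j : Idx n} (hij : i ≠ j) (c c' : A) :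
    D.Xmat i j c * D.Xmat i j c' = 0 := by
  unfold Xmat
  rw [sub_mul, mul_sub, mul_sub,
    Matrix.single_mul_single_of_ne _ _ _ _ (Ne.symm hij),
    Matrix.single_mul_single_of_ne _ _ _ _ (Ne.symm (Idx.neg_ne j)),
    Matrix.single_mul_single_of_ne _ _ _ _ (Idx.neg_ne i),
    Matrix.single_mul_single_of_ne _ _ _ _ (fun h => hij (Idx.neg_injective h))]
  simp

theorem Xmat_neg (D : FormRingData A) (i j : Idx n) (c : A) :
    D.Xmat i j (-c) = -D.Xmat i j c := by
  unfold Xmat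
  rw [map_neg, mul_neg, stdBasisMatrix_neg', stdBasisMatrix_neg']
  abel

/-- The elementary short root unipotent `T_{ij}(c)`, for `i ≠ ±j`
(with junk value `1` when `i = j`). -/
def TS (D : FormRingData A) (i j : Idx n) (c : A) : GLn A n :=
  if h : i = j then 1 else
    { val := 1 + D.Xmat i j c
      inv := 1 + D.Xmat i j (-c)
      val_inv := by
        rw [D.Xmat_neg, ← sub_eq_add_neg]
        exact one_add_mul_one_sub (D.Xmat_mul h c c)
      inv_val := by
        rw [D.Xmat_neg, ← sub_eq_add_neg]
        exact one_sub_mul_one_add (D.Xmat_mul h c c) }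

/-- The elementary long root unipotent `T_{i,−i}(c)`. -/
def TL (D : FormRingData A) (i : Idx n) (c : A) : GLn A n where
  val := 1 + single i (Idx.neg i) c
  inv := 1 + single i (Idx.neg i) (-c)
  val_inv := by
    rw [stdBasisMatrix_neg', ← sub_eq_add_neg]
    exact one_add_mul_one_sub (Matrix.single_mul_single_of_ne _ _ _ _ (Idx.neg_ne i) _)
  inv_val := by
    rw [stdBasisMatrix_neg', ← sub_eq_add_neg]
    exact one_sub_mul_one_add (Matrix.single_mul_single_of_ne _ _ _ _ (Idx.neg_ne i) _)

/-- The elementary unitary transvection `T_{ij}(c)` (long or short root type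
according to whether `j = −i`). -/
def T (D : FormRingData A) (i j : Idx n) (c : A) : GLn A n :=
  if j = Idx.neg i then D.TL i c else D.TS i j c

/-- The elementary commutator `Y_{ij}(a,b) = [T_{ij}(a), T_{ji}(b)]`. -/
def Y (D : FormRingData A) (i j : Idx n) (a b : A) : GLn A n :=
  ⁅D.T i j a, D.T j i b⁆

/-- The elementary conjugate `Z_{ij}(a,c) = T_{ji}(c) T_{ij}(a) T_{ji}(−c)`. -/
def Z (D : FormRingData A) (i j : Idx n) (a c : A) : GLn A n :=
  D.T j i c * D.T i j a * D.T j i (-c)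

/-- The set of elementary unitary transvections of level `(I,Γ)`. -/
def transvGen (D : FormRingData A) (n : ℕ) (I Γ : AddSubgroup A) : Set (GLn A n) :=
  {x | ∃ i j : Idx n, i ≠ j ∧ i ≠ Idx.neg j ∧ ∃ c ∈ I, x = D.TS i j c} ∪
    {x | ∃ i : Idx n, ∃ g ∈ Γ, x = D.TL i (D.lpow (-(Idx.eps i + 1) / 2) * g)}

/-- The unrelative elementary subgroup `FU(2n, I, Γ)`. -/
def FU (D : FormRingData A) (n : ℕ) (I Γ : AddSubgroup A) : Subgroup (GLn A n) :=
  Subgroup.closure (D.transvGen n I Γ)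

/-- The absolute elementary unitary group `EU(2n, A, Λ)`. -/
def EUmax (D : FormRingData A) (n : ℕ) : Subgroup (GLn A n) :=
  D.FU n ⊤ D.Lambda

/-- The relative elementary subgroup `EU(2n, I, Γ)`: the normal closure of
`FU(2n, I, Γ)` in `EU(2n, A, Λ)`. -/
def EU (D : FormRingData A) (n : ℕ) (I Γ : AddSubgroup A) : Subgroup (GLn A n) :=
  Subgroup.closure {x | ∃ g ∈ D.EUmax n, ∃ t ∈ D.transvGen n I Γ, x = g * t * g⁻¹}

/-- The additive subgroup generated by products `st`, `s ∈ S`, `t ∈ T`. -/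
def mulSub (S T : AddSubgroup A) : AddSubgroup A :=
  AddSubgroup.closure {x | ∃ a ∈ S, ∃ b ∈ T, x = a * b}

/-- The symmetrised product `ST + TS` of two (additive subgroups underlying)
two-sided ideals. -/
def symI (S T : AddSubgroup A) : AddSubgroup A :=
  mulSub S T ⊔ mulSub T S

/-- The minimal relative form parameter `Γ_min(K)` of level `K`. -/
def gammaMin (D : FormRingData A) (K : AddSubgroup A) : AddSubgroup A :=
  AddSubgroup.closure
    ({x | ∃ a ∈ K, x = a - D.lam * D.bar a} ∪
      {x | ∃ a ∈ K, ∃ c ∈ D.Lambda, x = a * c * D.bar a})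

/-- The relative form parameter `ˢΓ = ⟨ b γ b̄ ∣ b ∈ S, γ ∈ Γ ⟩`. -/
def conjPar (D : FormRingData A) (S Γ : AddSubgroup A) : AddSubgroup A :=
  AddSubgroup.closure {x | ∃ b ∈ S, ∃ g ∈ Γ, x = b * g * D.bar b}

/-- The relative form parameter of the symmetrised product
`(I,Γ)∘(J,Δ) = (IJ+JI, Γ_min(IJ+JI) + ᴶΓ + ᴵΔ)`. -/
def symG (D : FormRingData A) (I Γ J Δ : AddSubgroup A) : AddSubgroup A :=
  D.gammaMin (symI I J) ⊔ D.conjPar J Γ ⊔ D.conjPar I Δ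

/-- The elementary subgroup `EU(2n, (I,Γ)∘(J,Δ))` of the symmetrised product. -/
def EUsym (D : FormRingData A) (n : ℕ) (I Γ J Δ : AddSubgroup A) : Subgroup (GLn A n) :=
  D.EU n (symI I J) (D.symG I Γ J Δ)

/-- Position-dependent membership `a ∈ (I,Γ)` at position `(i,j)`:
`a ∈ I` for a short root position, `a ∈ λ^{−(ε(i)+1)/2}Γ` for a long one. -/
def pmem (D : FormRingData A) (I Γ : AddSubgroup A) {n : ℕ} (i j : Idx n) (a : A) : Prop :=
  if j = Idx.neg i then ∃ g ∈ Γ, a = D.lpow (-(Idx.eps i + 1) / 2) * g else a ∈ I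

end FormRingData

/-- A form ideal `(I,Γ)` of the form ring `(A,Λ)`. -/
structure FormIdeal {A : Type*} [Ring A] (D : FormRingData A) where
  I : AddSubgroup A
  Gamma : AddSubgroup A
  mul_mem_left : ∀ (c : A), ∀ x ∈ I, c * x ∈ I
  mul_mem_right : ∀ (c : A), ∀ x ∈ I, x * c ∈ I
  bar_mem : ∀ x ∈ I, D.bar x ∈ I
  gammaMin_le : D.gammaMin I ≤ Gamma
  gamma_le_I : Gamma ≤ I
  gamma_le_Lambda : Gamma ≤ D.Lambda
  gamma_conj : ∀ (c : A), ∀ x ∈ Gamma, c * x * D.bar c ∈ Gamma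

/-!
Let `y = [t, s]` with `t = T_{i,−i}(a)` and `s = T_{−i,i}(b)`. The elements of `EU(2n, A, Λ)` that
centralize `y` modulo the normal subgroup `H = EU(2n, (I,Γ)∘(J,Δ))` form a subgroup, so only
generators have to be considered. Those of short root type not involving `±i`, and those of long
root type at an index other than `±i`, commute with both `t` and `s`. The remaining short root
elements commute with one of the two, say with `t`; conjugation by `x = T_{ik}(c)` then turns `s`
into `s v p` with `v = T_{−i,k}(−bc)` and `p` a long root element commuting with `t`, so that
`[x, y]` is conjugate to `[v, t]⁻¹`, and since `bc ∈ J` the same conjugation formula,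
applied to `v` and `t`, puts `[v, t]` in `H`. Finally, this formula also expresses the long root
elements at `±i` through short root elements and long root elements at any other index.
-/

section CentralizerMod

variable {G : Type*} [Group G] {H : Subgroup G} {x y t s v p : G}

/-- The centralizer of `y` modulo `H`: the elements commuting with `y` up to `H`. It is taken inside
the normalizer of `H`, which makes it a subgroup. -/
def centralizerMod (H : Subgroup G) (y : G) : Subgroup G where
  carrier := {x | x ∈ Subgroup.normalizer H ∧ ⁅x, y⁆ ∈ H}
  one_mem' := ⟨one_mem _, by simp⟩
  mul_mem' := by
    rintro u v ⟨hu, huy⟩ ⟨hv, hvy⟩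
    refine ⟨mul_mem hu hv, ?_⟩
    rw [commutatorElement_mul_left_eq_conj_mul]
    exact mul_mem ((Subgroup.mem_normalizer_iff.1 hu _).1 hvy) huy
  inv_mem' := by
    rintro u ⟨hu, huy⟩
    refine ⟨inv_mem hu, ?_⟩
    rw [commutatorElement_inv_left, ← commutatorElement_inv]
    exact (Subgroup.mem_normalizer_iff''.1 hu _).1 (inv_mem huy)

theorem mem_centralizerMod_commutator_of_commute (hx : x ∈ Subgroup.normalizer H)
    (ht : Commute x t) (hs : Commute x s) : x ∈ centralizerMod H ⁅t, s⁆ := by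
  refine ⟨hx, ?_⟩
  have hts : Commute x ⁅t, s⁆ :=
    ((ht.mul_right hs).mul_right ht.inv_right).mul_right hs.inv_right
  rw [commutatorElement_eq_one_iff_commute.2 hts]
  exact one_mem H

theorem mem_centralizerMod_inv (hy : y ∈ Subgroup.normalizer H) (hx : x ∈ centralizerMod H y) :
    x ∈ centralizerMod H y⁻¹ := by
  refine ⟨hx.1, ?_⟩
  rw [commutatorElement_inv_right, ← commutatorElement_inv]
  exact (Subgroup.mem_normalizer_iff''.1 hy _).1 (inv_mem hx.2)

theorem commutator_commutator_eq_conj_inv (hxt : Commute x t) (hxs : x * s * x⁻¹ = s * v * p)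
    (hpt : Commute p t) :
    ⁅x, ⁅t, s⁆⁆ = t * s * t⁻¹ * ⁅v, t⁆⁻¹ * (t * s * t⁻¹)⁻¹ := by
  have hxt' : x * t * x⁻¹ = t := by rw [hxt.eq, mul_inv_cancel_right]
  have hpt' : p * t⁻¹ * p⁻¹ = t⁻¹ := by rw [hpt.inv_right.eq, mul_inv_cancel_right]
  calc ⁅x, ⁅t, s⁆⁆
      = ⁅x * t * x⁻¹, x * s * x⁻¹⁆ * ⁅t, s⁆⁻¹ := by
        rw [← conjugate_commutatorElement]; rfl
    _ = ⁅t, s * v * p⁆ * ⁅t, s⁆⁻¹ := by rw [hxt', hxs]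
    _ = t * s * v * (p * t⁻¹ * p⁻¹) * v⁻¹ * s⁻¹ * ⁅t, s⁆⁻¹ := by
        simp only [commutatorElement_def]; group
    _ = t * s * t⁻¹ * ⁅v, t⁆⁻¹ * (t * s * t⁻¹)⁻¹ := by
        rw [hpt']; simp only [commutatorElement_def]; group

theorem mem_centralizerMod_commutator_of_conj (hx : x ∈ Subgroup.normalizer H)
    (ht : t ∈ Subgroup.normalizer H) (hs : s ∈ Subgroup.normalizer H)
    (hxt : Commute x t) (hxs : x * s * x⁻¹ = s * v * p) (hpt : Commute p t) (hvt : ⁅v, t⁆ ∈ H) :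
    x ∈ centralizerMod H ⁅t, s⁆ := by
  refine ⟨hx, ?_⟩
  rw [commutator_commutator_eq_conj_inv hxt hxs hpt]
  exact (Subgroup.mem_normalizer_iff.1 (mul_mem (mul_mem ht hs) (inv_mem ht)) _).1 (inv_mem hvt)

end CentralizerMod

section RingIdentities

variable {R : Type*} [Ring R] {X S : R}

theorem commute_one_add_one_add (h : Commute X S) : Commute (1 + X) (1 + S) :=
  (Commute.one_right _).add_right ((Commute.one_left S).add_left h)

theorem one_add_conj_one_add (hX : X * X = 0) (hS : S * S = 0) (hSXS : S * X * S = 0) :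
    (1 + X) * (1 + S) * (1 - X) =
      (1 + S) * (1 + (X * S - S * X)) * (1 + -(X * S * X)) := by
  have hSV : S * (X * S - S * X) = 0 := by
    rw [mul_sub, ← mul_assoc, hSXS, ← mul_assoc, hS, zero_mul, sub_zero]
  have hSP : S * (X * S * X) = 0 := by
    rw [← mul_assoc, ← mul_assoc, hSXS, zero_mul]
  have hVP : (X * S - S * X) * (X * S * X) = 0 := by
    rw [sub_mul, mul_assoc X S, hSP, mul_zero, mul_assoc S X, ← mul_assoc X (X * S),
      ← mul_assoc X X, hX, zero_mul, zero_mul, mul_zero, sub_zero]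
  have h_left : (1 + S) * (1 + (X * S - S * X)) = 1 + S + (X * S - S * X) := by
    rw [mul_add, mul_one, add_mul, one_mul, hSV, add_zero]
  calc (1 + X) * (1 + S) * (1 - X)
      = (1 + X) * (1 - X) + (1 + X) * S * (1 - X) := by noncomm_ring
    _ = 1 + S + (X * S - S * X) + -(X * S * X) := by
        rw [one_add_mul_one_sub hX]; noncomm_ring
    _ = (1 + S) * (1 + (X * S - S * X)) * (1 + -(X * S * X)) := by
        rw [h_left, mul_add, mul_one, mul_neg, add_mul, add_mul, one_mul, hSP, hVP,
          add_zero, add_zero]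

end RingIdentities

namespace Idx

variable {n : ℕ}

theorem neg_involutive : Function.Involutive (neg (n := n)) := neg_neg

theorem eps_neg (i : Idx n) : eps (neg i) = -eps i := by
  rcases i with ⟨_, _ | _⟩ <;> rfl

theorem eps_eq_one_or (i : Idx n) : eps i = 1 ∨ eps i = -1 := by
  rcases i with ⟨_, _ | _⟩ <;> simp [eps]

theorem exists_eps_eq_ne_ne_neg (hn : 2 ≤ n) (i : Idx n) :
    ∃ q : Idx n, eps q = eps i ∧ q ≠ i ∧ q ≠ neg i := by
  have : Nontrivial (Fin n) := Fin.nontrivial_iff_two_le.2 hn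
  obtain ⟨m, hm⟩ := exists_ne i.1
  exact ⟨(m, i.2), rfl, fun h => hm (congrArg Prod.fst h), fun h => hm (congrArg Prod.fst h)⟩

end Idx

namespace FormRingData

variable {A : Type*} [Ring A] {n : ℕ} (D : FormRingData A)

section Lpow

theorem bar_one : D.bar 1 = 1 := by
  simpa only [one_mul, D.bar_bar] using (D.bar_mul 1 (D.bar 1)).symm

theorem bar_pow (a : A) (m : ℕ) : D.bar (a ^ m) = D.bar a ^ m := by
  induction m with
  | zero => simp only [pow_zero, D.bar_one]
  | succ m ih => rw [pow_succ, D.bar_mul, ih, pow_succ']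

/-- The symmetry `λ` as a unit of `A`. -/
def lamUnit : Aˣ where
  val := D.lam
  inv := D.bar D.lam
  val_inv := D.lam_bar
  inv_val := by rw [← D.lam_comm, D.lam_bar]

theorem lpow_natCast (m : ℕ) : D.lpow m = D.lam ^ m := by
  simp [lpow]

theorem lpow_neg_natCast (m : ℕ) : D.lpow (-m) = D.bar D.lam ^ m := by
  rcases m with _ | m
  · simp [lpow]
  · rw [lpow, if_neg (by lia), neg_neg, Int.toNat_natCast]

theorem lpow_eq_zpow (k : ℤ) : D.lpow k = ↑(D.lamUnit ^ k) := by
  obtain ⟨m, rfl | rfl⟩ := k.eq_nat_or_neg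
  · rw [D.lpow_natCast, zpow_natCast, Units.val_pow_eq_pow_val]; rfl
  · rw [D.lpow_neg_natCast, _root_.zpow_neg, zpow_natCast, ← inv_pow, Units.val_pow_eq_pow_val]; rfl

theorem lpow_zero : D.lpow 0 = 1 := by
  rw [D.lpow_eq_zpow, zpow_zero, Units.val_one]

theorem lpow_add (k l : ℤ) : D.lpow (k + l) = D.lpow k * D.lpow l := by
  rw [D.lpow_eq_zpow, D.lpow_eq_zpow, D.lpow_eq_zpow, _root_.zpow_add, Units.val_mul]

theorem commute_lpow (k : ℤ) (a : A) : Commute (D.lpow k) a := by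
  rw [D.lpow_eq_zpow]
  exact Commute.units_zpow_left (u := D.lamUnit) (D.lam_comm a) k

theorem bar_lpow (k : ℤ) : D.bar (D.lpow k) = D.lpow (-k) := by
  obtain ⟨m, rfl | rfl⟩ := k.eq_nat_or_neg
  · rw [D.lpow_natCast, D.bar_pow, D.lpow_neg_natCast]
  · rw [D.lpow_neg_natCast, D.bar_pow, D.bar_bar, neg_neg, D.lpow_natCast]

theorem lpow_mul_mul_lpow_mul (k l : ℤ) (a b : A) :
    D.lpow k * a * (D.lpow l * b) = D.lpow (k + l) * (a * b) := by
  rw [D.lpow_add, mul_assoc, ← mul_assoc a, ← (D.commute_lpow l a).eq]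
  simp only [mul_assoc]

theorem bar_lpow_mul (k : ℤ) (a : A) : D.bar (D.lpow k * a) = D.lpow (-k) * D.bar a := by
  rw [D.bar_mul, D.bar_lpow, (D.commute_lpow (-k) _).eq]

theorem bar_eq_of_mem_Lambda {d : A} (hd : d ∈ D.Lambda) : D.bar d = -(D.lpow (-1) * d) := by
  have hlam : D.lpow (-1) * D.lam = 1 := by
    rw [← pow_one D.lam, ← D.lpow_natCast, ← D.lpow_add, Nat.cast_one, neg_add_cancel, D.lpow_zero]
  calc D.bar d = D.lpow (-1) * (D.lam * D.bar d) := by rw [← mul_assoc, hlam, one_mul]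
    _ = -(D.lpow (-1) * d) := by rw [← neg_eq_iff_eq_neg.2 (D.lambdaMax_mem d hd), mul_neg]

end Lpow

section Adj

/-- The coefficient `λ^{(ε(j)−ε(i))/2} c̄` which `T_{ij}(c)` carries, with a minus sign, in position
`(−j, −i)`. It is the adjoint of `c e_{ij}` with respect to the hyperbolic form. -/
def adj (i j : Idx n) (c : A) : A :=
  D.lpow ((Idx.eps j - Idx.eps i) / 2) * D.bar c

/-- The parameters `λ^{−(ε(i)+1)/2} S` of the long root elements `T_{i,−i}` of level `S`. -/
def longParam (S : AddSubgroup A) (i : Idx n) : Set A :=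
  {a | ∃ g ∈ S, a = D.lpow (-(Idx.eps i + 1) / 2) * g}

theorem longParam_mono {S S' : AddSubgroup A} (h : S ≤ S') (i : Idx n) :
    D.longParam S i ⊆ D.longParam S' i :=
  fun _ ⟨g, hg, hag⟩ => ⟨g, h hg, hag⟩

theorem longParam_congr (S : AddSubgroup A) {i j : Idx n} (h : Idx.eps i = Idx.eps j) :
    D.longParam S i = D.longParam S j := by
  rw [longParam, longParam, h]

theorem adj_neg (i j : Idx n) (c : A) : D.adj i j (-c) = -D.adj i j c := by
  rw [adj, map_neg, mul_neg, adj]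

theorem adj_one_of_eps_eq {i j : Idx n} (h : Idx.eps i = Idx.eps j) : D.adj i j 1 = 1 := by
  rw [adj, h, sub_self, Int.zero_ediv, D.lpow_zero, D.bar_one, one_mul]

theorem adj_adj (i j : Idx n) (c : A) : D.adj (Idx.neg j) (Idx.neg i) (D.adj i j c) = c := by
  rw [adj, adj, D.bar_lpow_mul, D.bar_bar, ← mul_assoc, ← D.lpow_add, Idx.eps_neg, Idx.eps_neg,
    neg_sub_neg, add_neg_cancel, D.lpow_zero, one_mul]

theorem adj_mul (i j k : Idx n) (b c : A) :
    D.adj i k (b * c) = D.adj j k c * D.adj i j b := by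
  rw [adj, adj, adj, D.lpow_mul_mul_lpow_mul, D.bar_mul]
  congr 2
  have hi := i.eps_eq_one_or
  have hj := j.eps_eq_one_or
  lia

theorem adj_of_mem_longParam {i : Idx n} {a : A} (ha : a ∈ D.longParam D.Lambda i) :
    D.adj i (Idx.neg i) a = -a := by
  obtain ⟨d, hd, rfl⟩ := ha
  rw [adj, D.bar_lpow_mul, D.bar_eq_of_mem_Lambda hd, mul_neg, mul_neg, ← mul_assoc, ← mul_assoc,
    ← D.lpow_add, ← D.lpow_add, Idx.eps_neg]
  congr 3
  have hi := i.eps_eq_one_or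
  lia

theorem adj_mul_mul_mem_longParam {S T : AddSubgroup A} {i : Idx n} {a c : A}
    (hS : ∀ g ∈ S, D.bar c * g * c ∈ T) (ha : a ∈ D.longParam S i) (k : Idx n) :
    D.adj (Idx.neg i) k c * a * c ∈ D.longParam T (Idx.neg k) := by
  obtain ⟨g, hg, rfl⟩ := ha
  refine ⟨D.bar c * g * c, hS g hg, ?_⟩
  rw [adj, D.lpow_mul_mul_lpow_mul, mul_assoc, Idx.eps_neg, Idx.eps_neg]
  congr 2
  have hi := i.eps_eq_one_or
  have hk := k.eps_eq_one_or
  lia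

end Adj

section Transvections

theorem Xmat_eq (i j : Idx n) (c : A) :
    D.Xmat i j c = single i j c - single (Idx.neg j) (Idx.neg i) (D.adj i j c) := rfl

theorem val_TS {i j : Idx n} (h : i ≠ j) (c : A) : (D.TS i j c).val = 1 + D.Xmat i j c := by
  rw [TS, dif_neg h]

theorem val_inv_TS {i j : Idx n} (h : i ≠ j) (c : A) :
    (D.TS i j c)⁻¹.val = 1 - D.Xmat i j c := by
  rw [sub_eq_add_neg, ← D.Xmat_neg, TS, dif_neg h, Units.inv_mk]

theorem val_TL (i : Idx n) (c : A) : (D.TL i c).val = 1 + single i (Idx.neg i) c := rfl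

theorem TS_eq_TS_neg_neg {i j : Idx n} (h : i ≠ j) (c : A) :
    D.TS i j c = D.TS (Idx.neg j) (Idx.neg i) (-D.adj i j c) := by
  refine Units.ext ?_
  rw [D.val_TS h, D.val_TS (Idx.neg_injective.ne h.symm), D.Xmat_eq, D.Xmat_eq, D.adj_neg,
    D.adj_adj, ← single_neg, ← single_neg, Idx.neg_neg, Idx.neg_neg]
  abel

theorem commute_TS_TL {i j k : Idx n} (hjk : j ≠ k) (hki : k ≠ i) (hji : j ≠ Idx.neg i)
    (c a : A) : Commute (D.TS j k c) (D.TL i a) := by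
  refine Commute.units_of_val ?_
  rw [D.val_TS hjk, D.val_TL]
  refine commute_one_add_one_add (Commute.sub_left ?_ ?_)
  · rw [commute_iff_eq, single_mul_single_of_ne _ _ _ _ hki,
      single_mul_single_of_ne _ _ _ _ hji.symm]
  · rw [commute_iff_eq, single_mul_single_of_ne _ _ _ _ (Idx.neg_involutive.eq_iff.not.2 hji),
      single_mul_single_of_ne _ _ _ _ (Idx.neg_injective.ne hki.symm)]

theorem commute_TL_TL {i j : Idx n} (h : j ≠ Idx.neg i) (c a : A) :
    Commute (D.TL j c) (D.TL i a) := by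
  refine Commute.units_of_val ?_
  rw [D.val_TL, D.val_TL]
  refine commute_one_add_one_add ?_
  rw [commute_iff_eq, single_mul_single_of_ne _ _ _ _ (Idx.neg_involutive.eq_iff.not.2 h),
    single_mul_single_of_ne _ _ _ _ h.symm]

theorem TS_conj_TL {i k : Idx n} (hik : i ≠ k) (hik' : Idx.neg i ≠ k) {b : A}
    (hb : b ∈ D.longParam D.Lambda i) (c : A) :
    D.TS (Idx.neg i) k c * D.TL i b * (D.TS (Idx.neg i) k c)⁻¹ =
      D.TL i b * D.TS i k (-(b * c)) * D.TL (Idx.neg k) (D.adj (Idx.neg i) k c * b * c) := by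
  refine Units.ext ?_
  simp only [Units.val_mul, D.val_TS hik', D.val_inv_TS hik', D.val_TS hik, D.val_TL]
  have hX : D.Xmat (Idx.neg i) k c =
      single (Idx.neg i) k c - single (Idx.neg k) i (D.adj (Idx.neg i) k c) := by
    rw [D.Xmat_eq, Idx.neg_neg]
  have hXS : D.Xmat (Idx.neg i) k c * single i (Idx.neg i) b =
      -single (Idx.neg k) (Idx.neg i) (D.adj (Idx.neg i) k c * b) := by
    rw [hX, sub_mul, single_mul_single_of_ne _ _ _ _ hik.symm, single_mul_single_same, zero_sub]
  have hSX : single i (Idx.neg i) b * D.Xmat (Idx.neg i) k c = single i k (b * c) := by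
    rw [hX, mul_sub, single_mul_single_same,
      single_mul_single_of_ne _ _ _ _ (Idx.neg_injective.ne hik), sub_zero]
  have hXSX : D.Xmat (Idx.neg i) k c * single i (Idx.neg i) b * D.Xmat (Idx.neg i) k c =
      -single (Idx.neg k) k (D.adj (Idx.neg i) k c * b * c) := by
    rw [mul_assoc, hSX, hX, sub_mul, single_mul_single_of_ne _ _ _ _ hik.symm,
      single_mul_single_same, zero_sub, mul_assoc]
  have hV : D.Xmat i k (-(b * c)) = D.Xmat (Idx.neg i) k c * single i (Idx.neg i) b -
      single i (Idx.neg i) b * D.Xmat (Idx.neg i) k c := by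
    rw [hXS, hSX, D.Xmat_eq, D.adj_neg, D.adj_mul i (Idx.neg i) k, D.adj_of_mem_longParam hb,
      mul_neg, neg_neg, ← single_neg]
    abel
  rw [hV, Idx.neg_neg, one_add_conj_one_add (D.Xmat_mul hik' c c)
    (single_mul_single_of_ne _ _ _ _ (Idx.neg_ne i) _)
    (by rw [hSX, single_mul_single_of_ne _ _ _ _ hik.symm]), hXSX, neg_neg]

end Transvections

section ElementaryGroups

theorem TS_mem_EUmax {i k : Idx n} (hik : i ≠ k) (hik' : i ≠ Idx.neg k) (c : A) :
    D.TS i k c ∈ D.EUmax n :=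
  Subgroup.subset_closure (Or.inl ⟨i, k, hik, hik', c, AddSubgroup.mem_top c, rfl⟩)

theorem TL_mem_EUmax {i : Idx n} {a : A} (ha : a ∈ D.longParam D.Lambda i) :
    D.TL i a ∈ D.EUmax n := by
  obtain ⟨g, hg, rfl⟩ := ha
  exact Subgroup.subset_closure (Or.inr ⟨i, g, hg, rfl⟩)

theorem transvGen_subset_EU (I Γ : AddSubgroup A) : D.transvGen n I Γ ⊆ D.EU n I Γ :=
  fun t ht => Subgroup.subset_closure ⟨1, one_mem _, t, ht, by simp⟩

theorem TS_mem_EU {I : AddSubgroup A} (Γ : AddSubgroup A) {i k : Idx n} (hik : i ≠ k)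
    (hik' : i ≠ Idx.neg k) {c : A} (hc : c ∈ I) : D.TS i k c ∈ D.EU n I Γ :=
  D.transvGen_subset_EU I Γ (Or.inl ⟨i, k, hik, hik', c, hc, rfl⟩)

theorem TL_mem_EU (I : AddSubgroup A) {Γ : AddSubgroup A} {i : Idx n} {a : A}
    (ha : a ∈ D.longParam Γ i) : D.TL i a ∈ D.EU n I Γ := by
  obtain ⟨g, hg, rfl⟩ := ha
  exact D.transvGen_subset_EU I Γ (Or.inr ⟨i, g, hg, rfl⟩)

theorem EUmax_le_normalizer_EU (I Γ : AddSubgroup A) :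
    D.EUmax n ≤ Subgroup.normalizer (D.EU n I Γ) := by
  refine Subgroup.le_normalizer_closure_iff.2 ?_
  rintro x hx _ ⟨g, hg, t, ht, rfl⟩
  exact Subgroup.subset_closure ⟨x * g, mul_mem hx hg, t, ht, by group⟩

theorem TL_mem_of_TS_mem {K : Subgroup (GLn A n)} {q j : Idx n}
    (hTS : ∀ k l : Idx n, k ≠ l → k ≠ Idx.neg l → ∀ c, D.TS k l c ∈ K)
    (hε : Idx.eps q = Idx.eps j) (hqj : q ≠ j) (hqj' : q ≠ Idx.neg j) {c : A}
    (hc : c ∈ D.longParam D.Lambda j) (hq : D.TL q c ∈ K) : D.TL j c ∈ K := by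
  have hε' : Idx.eps (Idx.neg q) = Idx.eps (Idx.neg j) := by rw [Idx.eps_neg, Idx.eps_neg, hε]
  have hconj := D.TS_conj_TL hqj' (Idx.neg_injective.ne hqj)
    ((D.longParam_congr _ hε).symm ▸ hc) 1
  rw [Idx.neg_neg, D.adj_one_of_eps_eq hε', one_mul, mul_one, ← inv_mul_eq_iff_eq_mul] at hconj
  have hS := hTS (Idx.neg q) (Idx.neg j) (Idx.neg_injective.ne hqj)
    (by rw [Idx.neg_neg]; exact Idx.neg_involutive.eq_iff.not.2 hqj') 1
  have hV := hTS q (Idx.neg j) hqj' (by rwa [Idx.neg_neg]) (-c)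
  rw [← hconj]
  exact mul_mem (inv_mem (mul_mem hq hV)) (mul_mem (mul_mem hS hq) (inv_mem hS))

theorem EUmax_le_of_TS_mem_of_TL_mem (hn : 2 ≤ n) {K : Subgroup (GLn A n)} (i : Idx n)
    (hTS : ∀ k l : Idx n, k ≠ l → k ≠ Idx.neg l → ∀ c, D.TS k l c ∈ K)
    (hTL : ∀ q : Idx n, q ≠ i → q ≠ Idx.neg i → ∀ c ∈ D.longParam D.Lambda q, D.TL q c ∈ K) :
    D.EUmax n ≤ K := by
  refine (Subgroup.closure_le K).2 ?_
  rintro _ (⟨k, l, hkl, hkl', c, -, rfl⟩ | ⟨j, g, hg, rfl⟩)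
  · exact hTS k l hkl hkl' c
  have hc : D.lpow (-(Idx.eps j + 1) / 2) * g ∈ D.longParam D.Lambda j := ⟨g, hg, rfl⟩
  by_cases hj : j = i ∨ j = Idx.neg i
  · obtain ⟨q, hε, hqj, hqj'⟩ := j.exists_eps_eq_ne_ne_neg hn
    have hq : q ≠ i ∧ q ≠ Idx.neg i := by
      rcases hj with rfl | rfl
      · exact ⟨hqj, hqj'⟩
      · exact ⟨by rwa [Idx.neg_neg] at hqj', hqj⟩
    exact D.TL_mem_of_TS_mem hTS hε hqj hqj' hc
      (hTL q hq.1 hq.2 _ ((D.longParam_congr _ hε).symm ▸ hc))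
  · exact hTL j (fun h => hj (Or.inl h)) (fun h => hj (Or.inr h)) _ hc

end ElementaryGroups

section SymmetrisedProduct

theorem mul_mem_symI {S T : AddSubgroup A} {a b : A} (ha : a ∈ S) (hb : b ∈ T) :
    a * b ∈ symI S T :=
  AddSubgroup.mem_sup_left (AddSubgroup.subset_closure ⟨a, ha, b, hb, rfl⟩)

theorem conj_mem_symG (I : AddSubgroup A) {Γ J : AddSubgroup A} (Δ : AddSubgroup A) {b g : A}
    (hb : b ∈ J) (hg : g ∈ Γ) : b * g * D.bar b ∈ D.symG I Γ J Δ :=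
  AddSubgroup.mem_sup_left
    (AddSubgroup.mem_sup_right (AddSubgroup.subset_closure ⟨b, hb, g, hg, rfl⟩))

theorem EUsym_comm (I Γ J Δ : AddSubgroup A) : D.EUsym n I Γ J Δ = D.EUsym n J Δ I Γ := by
  have hI : symI I J = symI J I := sup_comm _ _
  rw [EUsym, EUsym, symG, symG, hI, sup_right_comm]

variable {D} (FI FJ : FormIdeal D)

theorem longParam_Gamma_subset_Lambda (i : Idx n) :
    D.longParam FI.Gamma i ⊆ D.longParam D.Lambda i :=
  D.longParam_mono FI.gamma_le_Lambda i

theorem longParam_Gamma_subset_I (i : Idx n) : D.longParam FI.Gamma i ⊆ FI.I := by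
  rintro _ ⟨g, hg, rfl⟩
  exact FI.mul_mem_left _ _ (FI.gamma_le_I hg)

theorem commutator_TS_TL_mem_EUsym {i k : Idx n} (hik : i ≠ k) (hik' : Idx.neg i ≠ k) {a c : A}
    (ha : a ∈ D.longParam FI.Gamma i) (hc : c ∈ FJ.I) :
    ⁅D.TS (Idx.neg i) k c, D.TL i a⁆ ∈ D.EUsym n FI.I FI.Gamma FJ.I FJ.Gamma := by
  have haΛ := longParam_Gamma_subset_Lambda FI i ha
  rw [commutatorElement_def, D.TS_conj_TL hik hik' haΛ, mul_assoc (D.TL i a)]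
  refine (Subgroup.mem_normalizer_iff.1
    (D.EUmax_le_normalizer_EU _ _ (D.TL_mem_EUmax haΛ)) _).1 (mul_mem ?_ ?_)
  · exact D.TS_mem_EU _ hik (Idx.neg_involutive.eq_iff.not.1 hik')
      (neg_mem (mul_mem_symI (longParam_Gamma_subset_I FI i ha) hc))
  · refine D.TL_mem_EU _ (D.adj_mul_mul_mem_longParam (fun g hg => ?_) ha k)
    simpa only [D.bar_bar] using D.conj_mem_symG FI.I FJ.Gamma (FJ.bar_mem c hc) hg

variable {FI FJ} {i : Idx n} {a b : A}

theorem TS_mem_centralizerMod_commutator_TL {k : Idx n} (hik : i ≠ k) (hik' : i ≠ Idx.neg k)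
    (ha : a ∈ D.longParam FI.Gamma i) (hb : b ∈ D.longParam FJ.Gamma (Idx.neg i)) (c : A) :
    D.TS i k c ∈ centralizerMod (D.EUsym n FI.I FI.Gamma FJ.I FJ.Gamma)
      ⁅D.TL i a, D.TL (Idx.neg i) b⁆ := by
  have hnik : Idx.neg i ≠ k := Idx.neg_involutive.eq_iff.not.2 hik'
  have hbΛ := longParam_Gamma_subset_Lambda FJ _ hb
  have hN := D.EUmax_le_normalizer_EU (n := n) (symI FI.I FJ.I)
    (D.symG FI.I FI.Gamma FJ.I FJ.Gamma)
  have hconj := D.TS_conj_TL hnik (by rwa [Idx.neg_neg]) hbΛ c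
  rw [Idx.neg_neg] at hconj
  exact mem_centralizerMod_commutator_of_conj (hN (D.TS_mem_EUmax hik hik' c))
    (hN (D.TL_mem_EUmax (longParam_Gamma_subset_Lambda FI i ha))) (hN (D.TL_mem_EUmax hbΛ))
    (D.commute_TS_TL hik hik.symm (Idx.neg_ne i).symm c a) hconj
    (D.commute_TL_TL (Idx.neg_injective.ne hik.symm) _ a)
    (commutator_TS_TL_mem_EUsym FI FJ hik hnik ha
      (neg_mem (FJ.mul_mem_right c b (longParam_Gamma_subset_I FJ _ hb))))

theorem TS_neg_mem_centralizerMod_commutator_TL {k : Idx n} (hik : Idx.neg i ≠ k)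
    (hik' : Idx.neg i ≠ Idx.neg k) (ha : a ∈ D.longParam FI.Gamma i)
    (hb : b ∈ D.longParam FJ.Gamma (Idx.neg i)) (c : A) :
    D.TS (Idx.neg i) k c ∈ centralizerMod (D.EUsym n FI.I FI.Gamma FJ.I FJ.Gamma)
      ⁅D.TL i a, D.TL (Idx.neg i) b⁆ := by
  have hmem := TS_mem_centralizerMod_commutator_TL hik hik' hb (by rwa [Idx.neg_neg]) c
  rw [Idx.neg_neg, D.EUsym_comm] at hmem
  have hta := D.TL_mem_EUmax (longParam_Gamma_subset_Lambda FI i ha)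
  have htb := D.TL_mem_EUmax (longParam_Gamma_subset_Lambda FJ _ hb)
  rw [← commutatorElement_inv]
  exact mem_centralizerMod_inv (D.EUmax_le_normalizer_EU _ _
    (mul_mem (mul_mem (mul_mem htb hta) (inv_mem htb)) (inv_mem hta))) hmem

theorem EUmax_le_centralizerMod_commutator_TL (hn : 2 ≤ n) (ha : a ∈ D.longParam FI.Gamma i)
    (hb : b ∈ D.longParam FJ.Gamma (Idx.neg i)) :
    D.EUmax n ≤ centralizerMod (D.EUsym n FI.I FI.Gamma FJ.I FJ.Gamma)
      ⁅D.TL i a, D.TL (Idx.neg i) b⁆ := by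
  have hN := D.EUmax_le_normalizer_EU (n := n) (symI FI.I FJ.I)
    (D.symG FI.I FI.Gamma FJ.I FJ.Gamma)
  refine D.EUmax_le_of_TS_mem_of_TL_mem hn i (fun j k hjk hjk' c => ?_) fun q hqi hqi' c hc => ?_
  · have hleft : ∀ j k : Idx n, j ≠ k → j ≠ Idx.neg k → ∀ c, j = i ∨ j = Idx.neg i →
        D.TS j k c ∈ centralizerMod (D.EUsym n FI.I FI.Gamma FJ.I FJ.Gamma)
          ⁅D.TL i a, D.TL (Idx.neg i) b⁆ := by
      rintro j k hjk hjk' c (rfl | rfl)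
      · exact TS_mem_centralizerMod_commutator_TL hjk hjk' ha hb c
      · exact TS_neg_mem_centralizerMod_commutator_TL hjk hjk' ha hb c
    by_cases hj : j = i ∨ j = Idx.neg i
    · exact hleft j k hjk hjk' c hj
    by_cases hk : k = i ∨ k = Idx.neg i
    · rw [D.TS_eq_TS_neg_neg hjk]
      exact hleft _ _ (Idx.neg_injective.ne hjk.symm) (by rw [Idx.neg_neg]; exact hjk'.symm) _
        (hk.symm.imp Idx.neg_involutive.eq_iff.2 (congrArg Idx.neg))
    push Not at hj hk
    exact mem_centralizerMod_commutator_of_commute (hN (D.TS_mem_EUmax hjk hjk' c))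
      (D.commute_TS_TL hjk hk.1 hj.2 c a)
      (D.commute_TS_TL hjk hk.2 (by rw [Idx.neg_neg]; exact hj.1) c b)
  · exact mem_centralizerMod_commutator_of_commute (hN (D.TL_mem_EUmax hc))
      (D.commute_TL_TL hqi' c a) (D.commute_TL_TL (by rwa [Idx.neg_neg]) c b)

end SymmetrisedProduct

end FormRingData

theorem statement9_general {A : Type*} [Ring A] (D : FormRingData A) (n : ℕ) (hn : 2 ≤ n)
    (FI FJ : FormIdeal D) (i : Idx n) (a b : A)
    (ha : ∃ g ∈ FI.Gamma, a = D.lpow (-(Idx.eps i + 1) / 2) * g)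
    (hb : ∃ d ∈ FJ.Gamma, b = D.lpow ((Idx.eps i - 1) / 2) * d)
    (x : GLn A n) (hx : x ∈ D.EUmax n) :
    x * ⁅D.TL i a, D.TL (Idx.neg i) b⁆ * x⁻¹ * (⁅D.TL i a, D.TL (Idx.neg i) b⁆)⁻¹ ∈
      D.EUsym n FI.I FI.Gamma FJ.I FJ.Gamma := by
  have hb' : b ∈ D.longParam FJ.Gamma (Idx.neg i) := by
    have hexp : -(Idx.eps (Idx.neg i) + 1) / 2 = (Idx.eps i - 1) / 2 := by
      rw [Idx.eps_neg]
      lia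
    rwa [FormRingData.longParam, hexp]
  exact (FormRingData.EUmax_le_centralizerMod_commutator_TL hn ha hb' hx).2

/-- Lemma 7: long root elementary commutators `Y_{i,−i}(a,b)` are invariant
under conjugation by `EU(2n,A,Λ)` modulo `EU(2n,(I,Γ)∘(J,Δ))`. -/
theorem statement9 {A : Type*} [Ring A] (D : FormRingData A) (n : ℕ) (hn : 3 ≤ n)
    (FI FJ : FormIdeal D) (i : Idx n) (a b : A)
    (ha : ∃ g ∈ FI.Gamma, a = D.lpow (-(Idx.eps i + 1) / 2) * g)
    (hb : ∃ d ∈ FJ.Gamma, b = D.lpow ((Idx.eps i - 1) / 2) * d)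
    (x : GLn A n) (hx : x ∈ D.EUmax n) :
    x * ⁅D.TL i a, D.TL (Idx.neg i) b⁆ * x⁻¹ * (⁅D.TL i a, D.TL (Idx.neg i) b⁆)⁻¹ ∈
      D.EUsym n FI.I FI.Gamma FJ.I FJ.Gamma :=
  statement9_general D n (by lia) FI FJ i a b ha hb x hx
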